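/- Fix a sign choice ± and let α > 0. Let f_1, ..., f_M be trigonometric polynomials, each of which is α-separated. Then ‖(Σ_{m=1}^M |H_± f_m|²)^{1/2}‖_{S²}² ≤ (2π/α + 1) ‖(Σ_{m=1}^M |f_m|²)^{1/2}‖_{S²}², i.e. sup_{x ∈ ℝ} ∫_x^{x+1} Σ_{m=1}^M |H_± f_m(s)|² ds ≤ (2π/α + 1) sup_{x ∈ ℝ} ∫_x^{x+1} Σ_{m=1}^M |f_m(s)|² ds. -/

import Mathlib

/-- A trigonometric polynomial `x ↦ Σ_{n<N} c_n e^{iλ_n x}` with strictly increasing real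
exponents. -/
structure TrigPoly where
  N : ℕ
  c : ℕ → ℂ
  Λ : ℕ → ℝ
  mono : ∀ n, n + 1 < N → Λ n < Λ (n + 1)

/-- Evaluation of a trigonometric polynomial. -/
noncomputable def TrigPoly.eval (P : TrigPoly) (x : ℝ) : ℂ :=
  ∑ n ∈ Finset.range P.N, P.c n * Complex.exp (Complex.I * (P.Λ n : ℂ) * (x : ℂ))

/-- `α`-separation of the exponents: `λ_{n+1} - λ_n > α`. -/
def TrigPoly.sep (P : TrigPoly) (α : ℝ) : Prop :=
  ∀ n, n + 1 < P.N → α < P.Λ (n + 1) - P.Λ n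

/-- `sgnPM true` is `sgn₊` (value `1` at `0`); `sgnPM false` is `sgn₋` (value `-1` at `0`). -/
noncomputable def sgnPM (pos : Bool) (x : ℝ) : ℝ :=
  if pos then (if 0 ≤ x then 1 else -1) else (if 0 < x then 1 else -1)

/-- The modified Hilbert transform `H_± f(x) = Σ_n (-i sgn_±(λ_n)) c_n e^{iλ_n x}`. -/
noncomputable def TrigPoly.hilb (pos : Bool) (P : TrigPoly) (x : ℝ) : ℂ :=
  ∑ n ∈ Finset.range P.N,
    (-Complex.I * (sgnPM pos (P.Λ n) : ℂ)) * P.c n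
      * Complex.exp (Complex.I * (P.Λ n : ℂ) * (x : ℂ))

/-!
Expanding the square, `∫_a^b |Σ c_n e^{iξ_n t}|²` is `(b - a) Σ |c_n|²` plus two boundary terms,
each the value at a vector of norm `(Σ |c_n|²)^{1/2}` of the quadratic form of the kernel
`1 / (ξ_m - ξ_n)`. The Hilbert inequality of Montgomery and Vaughan bounds this kernel by `π / α`
when the `ξ_n` are `α`-separated, so the integral differs from `(b - a) Σ |c_n|²` by at most
`(2π / α) Σ |c_n|²`. On an interval of length one this bounds the integral above by
`(2π / α + 1) Σ |c_n|²`; averaging over long intervals shows that the supremum over unit intervals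
is at least `Σ |c_n|²`. A multiplier of modulus at most one does not increase `Σ |c_n|²`.
-/

open scoped Matrix Matrix.Norms.L2Operator

section NormalMatrices

variable {ι : Type*} [Fintype ι]

section Eigenvectors

variable {A : Matrix ι ι ℂ} {μ : ℂ} {u : ι → ℂ}

lemma star_dotProduct_self_eq_sum_norm_sq (u : ι → ℂ) :
    star u ⬝ᵥ u = ((∑ n, ‖u n‖ ^ 2 : ℝ) : ℂ) := by
  simp [dotProduct, Complex.conj_mul']

open scoped ComplexOrder in
lemma star_vecMul_of_mulVec_eq_smul (hA : Aᴴ = -A) (hu : A *ᵥ u = μ • u) :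
    star u ᵥ* A = μ • star u := by
  have hleft : star u ᵥ* A = -star μ • star u := by
    rw [← neg_neg A, ← hA, Matrix.vecMul_neg, ← Matrix.star_mulVec, hu, star_smul, neg_smul]
  rcases eq_or_ne u 0 with rfl | hu0
  · simp
  have hne : star u ⬝ᵥ u ≠ 0 := mt dotProduct_star_self_eq_zero.mp hu0
  have hμ : -star μ * (star u ⬝ᵥ u) = μ * (star u ⬝ᵥ u) := by
    rw [← smul_eq_mul, ← smul_dotProduct, ← hleft, ← Matrix.dotProduct_mulVec, hu,
      dotProduct_smul, smul_eq_mul]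
  rw [hleft, mul_right_cancel₀ hne hμ]

lemma star_dotProduct_commutator_mulVec_eq_zero (hA : Aᴴ = -A) (hu : A *ᵥ u = μ • u)
    (D : Matrix ι ι ℂ) : star u ⬝ᵥ (D * A - A * D) *ᵥ u = 0 := by
  rw [Matrix.sub_mulVec, dotProduct_sub, ← Matrix.mulVec_mulVec, ← Matrix.mulVec_mulVec, hu,
    Matrix.dotProduct_mulVec _ A, star_vecMul_of_mulVec_eq_smul hA hu, Matrix.mulVec_smul,
    dotProduct_smul, smul_dotProduct, sub_self]

end Eigenvectors

variable [DecidableEq ι]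

lemma norm_star_dotProduct_mulVec_le (A : Matrix ι ι ℂ) (u : ι → ℂ) :
    ‖star u ⬝ᵥ A *ᵥ u‖ ≤ ‖A‖ * ∑ n, ‖u n‖ ^ 2 := by
  let v : EuclideanSpace ℂ ι := WithLp.toLp 2 u
  have hinner : star u ⬝ᵥ A *ᵥ u = inner ℂ v (WithLp.toLp 2 (A *ᵥ u)) := by
    rw [EuclideanSpace.inner_eq_star_dotProduct, dotProduct_comm]
  calc ‖star u ⬝ᵥ A *ᵥ u‖ ≤ ‖v‖ * ‖WithLp.toLp 2 (A *ᵥ u)‖ := hinner ▸ norm_inner_le_norm _ _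
    _ ≤ ‖v‖ * (‖A‖ * ‖v‖) := by gcongr; exact Matrix.l2_opNorm_mulVec A v
    _ = ‖A‖ * ∑ n, ‖u n‖ ^ 2 := by rw [← EuclideanSpace.norm_sq_eq v]; ring

variable [Nonempty ι] (A : Matrix ι ι ℂ) [IsStarNormal A]

lemma exists_hasEigenvalue_norm_eq_of_isStarNormal :
    ∃ μ, Module.End.HasEigenvalue (Matrix.toLin' A) μ ∧ ‖μ‖ = ‖A‖ := by
  obtain ⟨μ, hμ, hnorm⟩ := spectrum.exists_nnnorm_eq_spectralRadius A
  rw [IsStarNormal.spectralRadius_eq_nnnorm, ENNReal.coe_inj] at hnorm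
  rw [← Matrix.spectrum_toLin', ← Module.End.hasEigenvalue_iff_mem_spectrum] at hμ
  exact ⟨μ, hμ, congrArg NNReal.toReal hnorm⟩

lemma exists_norm_le_row_sum_of_isStarNormal : ∃ m, ‖A‖ ≤ ∑ n, ‖A m n‖ := by
  obtain ⟨μ, hμ, hnorm⟩ := exists_hasEigenvalue_norm_eq_of_isStarNormal A
  obtain ⟨m, hm⟩ := eigenvalue_mem_ball hμ
  refine ⟨m, hnorm ▸ ?_⟩
  rw [← Finset.add_sum_erase _ _ (Finset.mem_univ m)]
  exact norm_le_norm_add_const_of_dist_le hm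

end NormalMatrices

section SeparatedFamilies

/- The integers `⌊x i / α⌋` are positive and distinct, which compares the sum with `ζ(2)`. -/
lemma sum_inv_sq_le_of_separated {ι : Type*} {s : Finset ι} {x : ι → ℝ} {α : ℝ} (hα : 0 < α)
    (hx : ∀ i ∈ s, α ≤ x i) (hsep : (s : Set ι).Pairwise fun i j => α ≤ |x i - x j|) :
    ∑ i ∈ s, (x i)⁻¹ ^ 2 ≤ Real.pi ^ 2 / 6 / α ^ 2 := by
  have hone {i : ι} (hi : i ∈ s) : 1 ≤ x i / α := (one_le_div₀ hα).mpr (hx i hi)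
  have hinj : Set.InjOn (fun i => ⌊x i / α⌋₊) s := by
    intro i hi j hj hij
    by_contra hne
    have hfloor : ⌊x i / α⌋ = ⌊x j / α⌋ := by
      rw [← Int.natCast_floor_eq_floor (zero_le_one.trans (hone hi)),
        ← Int.natCast_floor_eq_floor (zero_le_one.trans (hone hj))]
      exact congrArg Nat.cast hij
    have hlt := Int.abs_sub_lt_one_of_floor_eq_floor hfloor
    rw [← sub_div, abs_div, abs_of_pos hα, div_lt_one hα] at hlt
    exact (hsep hi hj hne).not_gt hlt
  have hterm (i : ι) (hi : i ∈ s) : (x i)⁻¹ ^ 2 ≤ 1 / (⌊x i / α⌋₊ : ℝ) ^ 2 / α ^ 2 := by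
    have hfloor : (0 : ℝ) < ⌊x i / α⌋₊ := mod_cast Nat.floor_pos.mpr (hone hi)
    rw [inv_pow, ← one_div, div_div, ← mul_pow]
    gcongr
    exact (le_div_iff₀ hα).mp (Nat.floor_le (zero_le_one.trans (hone hi)))
  calc ∑ i ∈ s, (x i)⁻¹ ^ 2 ≤ (∑ i ∈ s, 1 / (⌊x i / α⌋₊ : ℝ) ^ 2) / α ^ 2 := by
        rw [Finset.sum_div]
        exact Finset.sum_le_sum hterm
    _ = (∑ k ∈ s.image fun i => ⌊x i / α⌋₊, 1 / (k : ℝ) ^ 2) / α ^ 2 := by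
        rw [Finset.sum_image hinj]
    _ ≤ Real.pi ^ 2 / 6 / α ^ 2 := by
        gcongr
        exact sum_le_hasSum _ (fun _ _ => by positivity) hasSum_zeta_two

lemma injective_of_separated {ι : Type*} {ξ : ι → ℝ} {α : ℝ} (hα : 0 < α)
    (hsep : Pairwise fun m n => α ≤ |ξ m - ξ n|) : ξ.Injective := by
  intro m n hmn
  by_contra hne
  exact (hα.trans_le (hsep hne)).ne' (by rw [hmn, sub_self, abs_zero])

lemma sum_inv_sub_sq_le_of_separated {ι : Type*} [Fintype ι] {ξ : ι → ℝ} {α : ℝ} (hα : 0 < α)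
    (hsep : Pairwise fun m n => α ≤ |ξ m - ξ n|) (m : ι) :
    ∑ n, (ξ m - ξ n)⁻¹ ^ 2 ≤ Real.pi ^ 2 / (3 * α ^ 2) := by
  have hbelow : ∑ n with ξ n < ξ m, (ξ m - ξ n)⁻¹ ^ 2 ≤ Real.pi ^ 2 / 6 / α ^ 2 := by
    refine sum_inv_sq_le_of_separated hα (fun n hn => ?_) fun i _ j _ hij => ?_
    · have hlt := (Finset.mem_filter.mp hn).2
      exact abs_of_pos (sub_pos.mpr hlt) ▸ hsep (ne_of_apply_ne ξ hlt.ne')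
    · simpa only [sub_sub_sub_cancel_left] using hsep hij.symm
  have habove : ∑ n with ξ m < ξ n, (ξ n - ξ m)⁻¹ ^ 2 ≤ Real.pi ^ 2 / 6 / α ^ 2 := by
    refine sum_inv_sq_le_of_separated hα (fun n hn => ?_) fun i _ j _ hij => ?_
    · have hlt := (Finset.mem_filter.mp hn).2
      exact abs_of_pos (sub_pos.mpr hlt) ▸ hsep (ne_of_apply_ne ξ hlt.ne')
    · simpa only [sub_sub_sub_cancel_right] using hsep hij
  have hsplit : ∑ n, (ξ m - ξ n)⁻¹ ^ 2 =
      ∑ n with ξ n < ξ m, (ξ m - ξ n)⁻¹ ^ 2 + ∑ n with ξ m < ξ n, (ξ n - ξ m)⁻¹ ^ 2 := by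
    simp only [Finset.sum_filter, ← Finset.sum_add_distrib]
    refine Finset.sum_congr rfl fun n _ => ?_
    rcases lt_trichotomy (ξ n) (ξ m) with h | h | h
    · simp [h, h.not_gt]
    · simp [h]
    · rw [if_neg h.not_gt, if_pos h, zero_add, ← neg_sub, inv_neg, neg_sq]
  calc ∑ n, (ξ m - ξ n)⁻¹ ^ 2 ≤ Real.pi ^ 2 / 6 / α ^ 2 + Real.pi ^ 2 / 6 / α ^ 2 :=
        hsplit.trans_le (add_le_add hbelow habove)
    _ = Real.pi ^ 2 / (3 * α ^ 2) := by field

end SeparatedFamilies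

section HilbertKernel

variable {ι : Type*}

/-- The skew-Hermitian kernel `1 / (ξ_m - ξ_n)` of the generalized Hilbert inequality. Its diagonal
vanishes because `0⁻¹ = 0`. -/
noncomputable def hilbertKernel (ξ : ι → ℝ) : Matrix ι ι ℂ :=
  Matrix.of fun m n => (((ξ m - ξ n)⁻¹ : ℝ) : ℂ)

lemma hilbertKernel_self (ξ : ι → ℝ) (m : ι) : hilbertKernel ξ m m = 0 := by
  simp [hilbertKernel]

lemma hilbertKernel_swap (ξ : ι → ℝ) (m n : ι) : hilbertKernel ξ n m = -hilbertKernel ξ m n := by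
  simp [hilbertKernel, ← inv_neg]

lemma conjTranspose_hilbertKernel (ξ : ι → ℝ) : (hilbertKernel ξ)ᴴ = -hilbertKernel ξ := by
  ext m n
  simp [hilbertKernel, ← inv_neg]

lemma norm_hilbertKernel_apply_sq (ξ : ι → ℝ) (m n : ι) :
    ‖hilbertKernel ξ m n ^ 2‖ = (ξ m - ξ n)⁻¹ ^ 2 := by
  rw [hilbertKernel, Matrix.of_apply, norm_pow, Complex.norm_real, Real.norm_eq_abs, sq_abs]

variable [DecidableEq ι]

lemma hilbertKernel_mul_hilbertKernel {ξ : ι → ℝ} (hξ : ξ.Injective) {m k : ι} (hmk : m ≠ k)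
    (n : ι) :
    hilbertKernel ξ m n * hilbertKernel ξ n k =
      hilbertKernel ξ m k * (hilbertKernel ξ m n + hilbertKernel ξ n k
        - (if n = m then hilbertKernel ξ m k else 0)
        - if n = k then hilbertKernel ξ m k else 0) := by
  rcases eq_or_ne n m with rfl | hnm
  · simp [hilbertKernel_self, hmk]
  rcases eq_or_ne n k with rfl | hnk
  · simp [hilbertKernel_self, hmk.symm]
  have hsub {i j : ι} (hij : i ≠ j) : (ξ i : ℂ) - ξ j ≠ 0 :=
    sub_ne_zero.mpr ((Complex.ofReal_injective.comp hξ).ne hij)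
  have hmn' := hsub hnm.symm
  have hnk' := hsub hnk
  have hmk' := hsub hmk
  simp only [hnm, hnk, hilbertKernel, Matrix.of_apply, if_false, Complex.ofReal_inv,
    Complex.ofReal_sub]
  field_simp
  ring

variable [Fintype ι]

/-- What remains of `-K²`, for `K = hilbertKernel ξ`, after removing the commutator of `K` with the
diagonal matrix of its row sums; see `hilbertKernel_mul_self`. -/
noncomputable def hilbertKernelRemainder (ξ : ι → ℝ) : Matrix ι ι ℂ :=
  Matrix.of fun m n =>
    if m = n then ∑ k, hilbertKernel ξ m k ^ 2 else 2 * hilbertKernel ξ m n ^ 2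

lemma hilbertKernel_mul_self {ξ : ι → ℝ} (hξ : ξ.Injective) :
    hilbertKernel ξ * hilbertKernel ξ =
      (Matrix.diagonal fun m => ∑ n, hilbertKernel ξ m n) * hilbertKernel ξ
        - hilbertKernel ξ * (Matrix.diagonal fun m => ∑ n, hilbertKernel ξ m n)
        - hilbertKernelRemainder ξ := by
  ext m k
  rw [Matrix.sub_apply, Matrix.sub_apply, Matrix.diagonal_mul, Matrix.mul_diagonal,
    Matrix.mul_apply, hilbertKernelRemainder, Matrix.of_apply]
  rcases eq_or_ne m k with rfl | hmk
  · simp [hilbertKernel_self, hilbertKernel_swap ξ m, sq]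
  · have hcol : ∑ n, hilbertKernel ξ n k = -∑ n, hilbertKernel ξ k n := by
      simp only [hilbertKernel_swap ξ k, Finset.sum_neg_distrib]
    simp only [hilbertKernel_mul_hilbertKernel hξ hmk, ← Finset.mul_sum, Finset.sum_sub_distrib,
      Finset.sum_add_distrib, hcol, Finset.sum_ite_eq', Finset.mem_univ, if_true, if_neg hmk]
    ring

lemma isHermitian_hilbertKernelRemainder (ξ : ι → ℝ) : (hilbertKernelRemainder ξ).IsHermitian := by
  ext m n
  rcases eq_or_ne m n with rfl | hmn
  · simp [hilbertKernelRemainder, hilbertKernel]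
  · have hreal : star (hilbertKernel ξ n m) = hilbertKernel ξ n m := Complex.conj_ofReal _
    simp [hilbertKernelRemainder, hmn, hmn.symm, hreal, hilbertKernel_swap ξ n m]

lemma sum_norm_hilbertKernelRemainder_le (ξ : ι → ℝ) (m : ι) :
    ∑ n, ‖hilbertKernelRemainder ξ m n‖ ≤ 3 * ∑ n, (ξ m - ξ n)⁻¹ ^ 2 := by
  have hentry (n : ι) : ‖hilbertKernelRemainder ξ m n‖ ≤
      (if m = n then ∑ k, (ξ m - ξ k)⁻¹ ^ 2 else 0) + 2 * (ξ m - ξ n)⁻¹ ^ 2 := by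
    rw [hilbertKernelRemainder, Matrix.of_apply]
    split_ifs with hmn
    · refine (norm_sum_le _ _).trans ?_
      simp only [norm_hilbertKernel_apply_sq]
      exact le_add_of_nonneg_right (by positivity)
    · rw [norm_mul, norm_hilbertKernel_apply_sq, Complex.norm_ofNat, zero_add]
  refine (Finset.sum_le_sum fun n _ => hentry n).trans_eq ?_
  rw [Finset.sum_add_distrib, Finset.sum_ite_eq, if_pos (Finset.mem_univ m), ← Finset.mul_sum]
  ring

/- The commutator with the row sums, the only part of `K²` not controlled by `Σ (ξ_m - ξ_n)⁻²`,
disappears when tested against an eigenvector of `K`. -/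
lemma sq_mul_star_dotProduct_self_of_hilbertKernel_mulVec {ξ : ι → ℝ} (hξ : ξ.Injective) {μ : ℂ}
    {u : ι → ℂ} (hu : hilbertKernel ξ *ᵥ u = μ • u) :
    μ ^ 2 * (star u ⬝ᵥ u) = -(star u ⬝ᵥ hilbertKernelRemainder ξ *ᵥ u) := by
  calc μ ^ 2 * (star u ⬝ᵥ u) = star u ⬝ᵥ (hilbertKernel ξ * hilbertKernel ξ) *ᵥ u := by
        simp only [← Matrix.mulVec_mulVec, hu, Matrix.mulVec_smul, dotProduct_smul, smul_eq_mul]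
        ring
    _ = -(star u ⬝ᵥ hilbertKernelRemainder ξ *ᵥ u) := by
        rw [hilbertKernel_mul_self hξ, Matrix.sub_mulVec, dotProduct_sub,
          star_dotProduct_commutator_mulVec_eq_zero (conjTranspose_hilbertKernel ξ) hu, zero_sub]

lemma exists_norm_hilbertKernel_sq_le [Nonempty ι] {ξ : ι → ℝ} (hξ : ξ.Injective) :
    ∃ m, ‖hilbertKernel ξ‖ ^ 2 ≤ 3 * ∑ n, (ξ m - ξ n)⁻¹ ^ 2 := by
  have : IsStarNormal (hilbertKernel ξ) := by
    refine ⟨?_⟩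
    rw [Matrix.star_eq_conjTranspose, conjTranspose_hilbertKernel]
    exact (Commute.refl _).neg_left
  have : IsStarNormal (hilbertKernelRemainder ξ) :=
    (isHermitian_hilbertKernelRemainder ξ).isSelfAdjoint.isStarNormal
  obtain ⟨μ, hμ, hnorm⟩ := exists_hasEigenvalue_norm_eq_of_isStarNormal (hilbertKernel ξ)
  obtain ⟨u, hu⟩ := hμ.exists_hasEigenvector
  obtain ⟨m, hm⟩ := exists_norm_le_row_sum_of_isStarNormal (hilbertKernelRemainder ξ)
  have hform := sq_mul_star_dotProduct_self_of_hilbertKernel_mulVec hξ hu.apply_eq_smul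
  have hpos : 0 < ∑ n, ‖u n‖ ^ 2 := by
    obtain ⟨i, hi⟩ := Function.ne_iff.mp hu.2
    have := norm_pos_iff.mpr hi
    exact Finset.sum_pos' (fun _ _ => by positivity) ⟨i, Finset.mem_univ i, by positivity⟩
  refine ⟨m, le_trans (le_of_mul_le_mul_right ?_ hpos)
    (hm.trans (sum_norm_hilbertKernelRemainder_le ξ m))⟩
  calc ‖hilbertKernel ξ‖ ^ 2 * ∑ n, ‖u n‖ ^ 2 = ‖μ ^ 2 * (star u ⬝ᵥ u)‖ := by
        rw [star_dotProduct_self_eq_sum_norm_sq, norm_mul, norm_pow, hnorm,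
          Complex.norm_of_nonneg hpos.le]
    _ ≤ ‖hilbertKernelRemainder ξ‖ * ∑ n, ‖u n‖ ^ 2 := by
        rw [hform, norm_neg]
        exact norm_star_dotProduct_mulVec_le _ u

lemma norm_hilbertKernel_le {ξ : ι → ℝ} {α : ℝ} (hα : 0 < α)
    (hsep : Pairwise fun m n => α ≤ |ξ m - ξ n|) : ‖hilbertKernel ξ‖ ≤ Real.pi / α := by
  cases isEmpty_or_nonempty ι
  · rw [Subsingleton.elim (hilbertKernel ξ) 0, norm_zero]
    positivity
  have hξ := injective_of_separated hα hsep
  obtain ⟨m, hm⟩ := exists_norm_hilbertKernel_sq_le hξ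
  refine le_of_sq_le_sq ?_ (by positivity)
  calc ‖hilbertKernel ξ‖ ^ 2 ≤ 3 * (Real.pi ^ 2 / (3 * α ^ 2)) :=
        hm.trans (by gcongr; exact sum_inv_sub_sq_le_of_separated hα hsep m)
    _ = (Real.pi / α) ^ 2 := by field

end HilbertKernel

section MeanSquare

variable {ι : Type*}

/-- The vector at time `t` of the terms `c_n e^{iξ_n t}` of an exponential sum, unsummed so that
matrices can act on it. -/
noncomputable def modes (ξ : ι → ℝ) (c : ι → ℂ) (t : ℝ) : ι → ℂ :=
  fun n => c n * Complex.exp (Complex.I * ξ n * t)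

lemma norm_modes_apply (ξ : ι → ℝ) (c : ι → ℂ) (t : ℝ) (n : ι) : ‖modes ξ c t n‖ = ‖c n‖ := by
  simp [modes, Complex.norm_exp]

lemma hasDerivAt_modes_apply (ξ : ι → ℝ) (c : ι → ℂ) (n : ι) (t : ℝ) :
    HasDerivAt (fun s => modes ξ c s n) (Complex.I * ξ n * modes ξ c t n) t := by
  have hlin : HasDerivAt (fun s : ℝ => Complex.I * ξ n * (s : ℂ)) (Complex.I * ξ n) t := by
    simpa using (Complex.ofRealCLM.hasDerivAt (x := t)).const_mul (Complex.I * ξ n)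
  exact (hlin.cexp.const_mul (c n)).congr_deriv (by rw [modes]; ring)

lemma continuous_star_modes_mul_modes (ξ : ι → ℝ) (c : ι → ℂ) (m n : ι) :
    Continuous fun t => star (modes ξ c t m) * modes ξ c t n := by
  unfold modes
  fun_prop

lemma integral_star_modes_mul_modes [DecidableEq ι] {ξ : ι → ℝ} (hξ : ξ.Injective) (c : ι → ℂ)
    (a b : ℝ) (m n : ι) :
    ∫ t in a..b, star (modes ξ c t m) * modes ξ c t n =
      (if m = n then ((b - a) * ‖c m‖ ^ 2 : ℂ) else 0) +
        Complex.I * (star (modes ξ c b m) * (hilbertKernel ξ m n * modes ξ c b n)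
          - star (modes ξ c a m) * (hilbertKernel ξ m n * modes ξ c a n)) := by
  rcases eq_or_ne m n with rfl | hmn
  · simp [hilbertKernel_self, Complex.conj_mul', norm_modes_apply]
  have hkernel : ((ξ m : ℂ) - ξ n) * hilbertKernel ξ m n = 1 := by
    rw [hilbertKernel, Matrix.of_apply, ← Complex.ofReal_sub, ← Complex.ofReal_mul,
      mul_inv_cancel₀ (sub_ne_zero.mpr (hξ.ne hmn)), Complex.ofReal_one]
  have hderiv (t : ℝ) : HasDerivAt
      (fun s => Complex.I * (star (modes ξ c s m) * (hilbertKernel ξ m n * modes ξ c s n)))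
      (star (modes ξ c t m) * modes ξ c t n) t := by
    refine ((hasDerivAt_modes_apply ξ c m t).star.mul
      ((hasDerivAt_modes_apply ξ c n t).const_mul _)).const_mul _ |>.congr_deriv ?_
    have hstar : star (Complex.I * ξ m * modes ξ c t m) =
        -(Complex.I * ξ m * star (modes ξ c t m)) := by simp
    rw [hstar]
    linear_combination (star (modes ξ c t m) * modes ξ c t n) *
      (hkernel - (ξ m - ξ n) * hilbertKernel ξ m n * Complex.I_sq)
  rw [if_neg hmn, zero_add, mul_sub]
  exact intervalIntegral.integral_eq_sub_of_hasDerivAt (fun t _ => hderiv t)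
    ((continuous_star_modes_mul_modes ξ c m n).intervalIntegrable a b)

variable [Fintype ι]

lemma integral_norm_sum_modes_sq {ξ : ι → ℝ} (hξ : ξ.Injective) (c : ι → ℂ) (a b : ℝ) :
    ((∫ t in a..b, ‖∑ n, modes ξ c t n‖ ^ 2 : ℝ) : ℂ) =
      (b - a) * ((∑ n, ‖c n‖ ^ 2 : ℝ) : ℂ) +
        Complex.I * (star (modes ξ c b) ⬝ᵥ hilbertKernel ξ *ᵥ modes ξ c b
          - star (modes ξ c a) ⬝ᵥ hilbertKernel ξ *ᵥ modes ξ c a) := by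
  classical
  have hexpand (t : ℝ) : ((‖∑ n, modes ξ c t n‖ ^ 2 : ℝ) : ℂ) =
      ∑ m, ∑ n, star (modes ξ c t m) * modes ξ c t n := by
    rw [Complex.ofReal_pow, ← Complex.conj_mul', map_sum, Finset.sum_mul_sum]
    rfl
  have hcont (m n : ι) := continuous_star_modes_mul_modes ξ c m n
  rw [← intervalIntegral.integral_ofReal]
  simp only [hexpand]
  rw [intervalIntegral.integral_finsetSum fun m _ =>
    (continuous_finsetSum _ fun n _ => hcont m n).intervalIntegrable a b]
  simp_rw [intervalIntegral.integral_finsetSum fun n _ => (hcont _ n).intervalIntegrable a b,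
    integral_star_modes_mul_modes hξ]
  simp [dotProduct, Matrix.mulVec, Finset.sum_add_distrib, Finset.mul_sum,
    Finset.sum_sub_distrib, mul_sub]

variable [DecidableEq ι]

lemma abs_integral_norm_sum_modes_sq_sub_le {ξ : ι → ℝ} (hξ : ξ.Injective) (c : ι → ℂ) (a b : ℝ) :
    |(∫ t in a..b, ‖∑ n, modes ξ c t n‖ ^ 2) - (b - a) * ∑ n, ‖c n‖ ^ 2| ≤
      2 * ‖hilbertKernel ξ‖ * ∑ n, ‖c n‖ ^ 2 := by
  have hform (t : ℝ) : ‖star (modes ξ c t) ⬝ᵥ hilbertKernel ξ *ᵥ modes ξ c t‖ ≤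
      ‖hilbertKernel ξ‖ * ∑ n, ‖c n‖ ^ 2 := by
    simpa only [norm_modes_apply] using
      norm_star_dotProduct_mulVec_le (hilbertKernel ξ) (modes ξ c t)
  rw [← Real.norm_eq_abs, ← Complex.norm_real, Complex.ofReal_sub, Complex.ofReal_mul,
    Complex.ofReal_sub, integral_norm_sum_modes_sq hξ, add_sub_cancel_left, norm_mul,
    Complex.norm_I, one_mul]
  refine (norm_sub_le _ _).trans ((add_le_add (hform b) (hform a)).trans_eq ?_)
  ring

end MeanSquare

lemma le_iSup_integral_of_mul_sub_le {g : ℝ → ℝ}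
    (hg : ∀ a b, IntervalIntegrable g MeasureTheory.volume a b)
    (hbdd : BddAbove (Set.range fun x : ℝ => ∫ s in x..(x + 1), g s)) {C D : ℝ}
    (hlower : ∀ K : ℕ, K * C - D ≤ ∫ s in (0 : ℝ)..K, g s) :
    C ≤ ⨆ x : ℝ, ∫ s in x..(x + 1), g s := by
  set S := ⨆ x : ℝ, ∫ s in x..(x + 1), g s
  have hupper (K : ℕ) : ∫ s in (0 : ℝ)..K, g s ≤ K * S := by
    calc ∫ s in (0 : ℝ)..K, g s = ∑ k ∈ Finset.range K, ∫ s in (k : ℝ)..(k + 1 : ℕ), g s := by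
          rw [intervalIntegral.sum_integral_adjacent_intervals fun k _ => hg _ _, Nat.cast_zero]
      _ ≤ ∑ _k ∈ Finset.range K, S := by
          refine Finset.sum_le_sum fun k _ => ?_
          exact Nat.cast_succ (R := ℝ) k ▸ le_ciSup hbdd (k : ℝ)
      _ = K * S := by simp
  by_contra! hlt
  obtain ⟨K, hK⟩ := exists_lt_nsmul (sub_pos.mpr hlt) D
  rw [nsmul_eq_mul, mul_sub] at hK
  linarith [hlower K, hupper K]

namespace TrigPoly

/-- The sum `Σ |c_n|²`, which is the mean value of `|f|²` over long intervals. -/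
noncomputable def energy (P : TrigPoly) : ℝ := ∑ n ∈ Finset.range P.N, ‖P.c n‖ ^ 2

lemma continuous_eval (P : TrigPoly) : Continuous P.eval := by
  unfold eval
  fun_prop

lemma sep.pairwise_le_abs_sub {P : TrigPoly} {α : ℝ} (hP : P.sep α) :
    Pairwise fun m n : Fin P.N => α ≤ |P.Λ m - P.Λ n| := by
  have hmono : StrictMonoOn P.Λ (Set.Iio P.N) :=
    strictMonoOn_of_lt_add_one Set.ordConnected_Iio fun n _ _ hn => P.mono n hn
  have hlt {m n : Fin P.N} (hmn : m < n) : α ≤ P.Λ n - P.Λ m := by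
    have hsucc : (m : ℕ) + 1 < P.N := (Nat.succ_le_of_lt hmn).trans_lt n.isLt
    have hle : P.Λ (m + 1) ≤ P.Λ n := hmono.monotoneOn hsucc n.isLt (Nat.succ_le_of_lt hmn)
    linarith [hP m hsucc]
  intro m n hmn
  rcases hmn.lt_or_gt with h | h
  · exact (hlt h).trans (abs_sub_comm (P.Λ m) _ ▸ le_abs_self _)
  · exact (hlt h).trans (le_abs_self _)

lemma abs_integral_norm_eval_sq_sub_le {P : TrigPoly} {α : ℝ} (hα : 0 < α) (hP : P.sep α)
    (a b : ℝ) :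
    |(∫ t in a..b, ‖P.eval t‖ ^ 2) - (b - a) * P.energy| ≤ 2 * Real.pi / α * P.energy := by
  have hsep := hP.pairwise_le_abs_sub
  have hint := abs_integral_norm_sum_modes_sq_sub_le
    (injective_of_separated hα hsep) (fun n => P.c n) a b
  have heval (t : ℝ) : P.eval t = ∑ n, modes (fun n : Fin P.N => P.Λ n) (fun n => P.c n) t n :=
    Finset.sum_range _
  simp only [heval, energy, Finset.sum_range]
  refine hint.trans ?_
  rw [mul_div_assoc]
  gcongr
  exact norm_hilbertKernel_le hα hsep

section Families

variable {ι : Type*} [Fintype ι] {α : ℝ} {P : ι → TrigPoly}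

lemma abs_integral_sum_norm_eval_sq_sub_le (hα : 0 < α) (hP : ∀ i, (P i).sep α) (a b : ℝ) :
    |(∫ t in a..b, ∑ i, ‖(P i).eval t‖ ^ 2) - (b - a) * ∑ i, (P i).energy| ≤
      2 * Real.pi / α * ∑ i, (P i).energy := by
  have hcont (i : ι) : Continuous fun t => ‖(P i).eval t‖ ^ 2 := (P i).continuous_eval.norm.pow 2
  rw [intervalIntegral.integral_finsetSum fun i _ => (hcont i).intervalIntegrable a b,
    Finset.mul_sum, Finset.mul_sum, ← Finset.sum_sub_distrib]
  exact (Finset.abs_sum_le_sum_abs _ _).trans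
    (Finset.sum_le_sum fun i _ => abs_integral_norm_eval_sq_sub_le hα (hP i) a b)

lemma integral_sum_norm_eval_sq_le (hα : 0 < α) (hP : ∀ i, (P i).sep α) (x : ℝ) :
    ∫ t in x..(x + 1), ∑ i, ‖(P i).eval t‖ ^ 2 ≤ (2 * Real.pi / α + 1) * ∑ i, (P i).energy := by
  have h := (abs_le.mp (abs_integral_sum_norm_eval_sq_sub_le hα hP x (x + 1))).2
  linarith

lemma sum_energy_le_iSup_integral (hα : 0 < α) (hP : ∀ i, (P i).sep α) :
    ∑ i, (P i).energy ≤ ⨆ x : ℝ, ∫ t in x..(x + 1), ∑ i, ‖(P i).eval t‖ ^ 2 := by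
  have hcont : Continuous fun t => ∑ i, ‖(P i).eval t‖ ^ 2 :=
    continuous_finsetSum _ fun i _ => (P i).continuous_eval.norm.pow 2
  refine le_iSup_integral_of_mul_sub_le (D := 2 * Real.pi / α * ∑ i, (P i).energy)
    (fun a b => hcont.intervalIntegrable a b) ?_ fun K => ?_
  · exact ⟨_, Set.forall_mem_range.mpr (integral_sum_norm_eval_sq_le hα hP)⟩
  · have h := (abs_le.mp (abs_integral_sum_norm_eval_sq_sub_le hα hP 0 K)).1
    linarith

end Families

/-- The action of the Fourier multiplier with symbol `σ`: `c_n` becomes `σ(λ_n) c_n`. The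
transforms `H_±` are the case `σ = -i sgn_±`. -/
def applyMultiplier (σ : ℝ → ℂ) (P : TrigPoly) : TrigPoly :=
  { P with c := fun n => σ (P.Λ n) * P.c n }

lemma sep.applyMultiplier {P : TrigPoly} {α : ℝ} (hP : P.sep α) (σ : ℝ → ℂ) :
    (P.applyMultiplier σ).sep α := hP

lemma hilb_eq_eval_applyMultiplier (pos : Bool) (P : TrigPoly) :
    P.hilb pos = (P.applyMultiplier fun ξ => -Complex.I * (sgnPM pos ξ : ℂ)).eval := rfl

lemma energy_applyMultiplier_le {σ : ℝ → ℂ} (hσ : ∀ ξ, ‖σ ξ‖ ≤ 1) (P : TrigPoly) :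
    (P.applyMultiplier σ).energy ≤ P.energy := by
  refine Finset.sum_le_sum fun n _ => ?_
  gcongr
  exact (norm_mul_le _ _).trans (mul_le_of_le_one_left (norm_nonneg _) (hσ _))

end TrigPoly

lemma norm_neg_I_mul_sgnPM (pos : Bool) (ξ : ℝ) : ‖-Complex.I * (sgnPM pos ξ : ℂ)‖ = 1 := by
  unfold sgnPM
  split_ifs <;> simp

theorem stmt_8_general {ι : Type*} [Fintype ι] {α : ℝ} (hα : 0 < α) {P : ι → TrigPoly}
    (hP : ∀ i, (P i).sep α) {σ : ι → ℝ → ℂ} (hσ : ∀ i ξ, ‖σ i ξ‖ ≤ 1) :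
    (⨆ x : ℝ, ∫ s in x..(x + 1), ∑ i, ‖((P i).applyMultiplier (σ i)).eval s‖ ^ 2)
      ≤ (2 * Real.pi / α + 1) * ⨆ x : ℝ, ∫ s in x..(x + 1), ∑ i, ‖(P i).eval s‖ ^ 2 := by
  refine ciSup_le fun x => ?_
  calc ∫ s in x..(x + 1), ∑ i, ‖((P i).applyMultiplier (σ i)).eval s‖ ^ 2
      ≤ (2 * Real.pi / α + 1) * ∑ i, ((P i).applyMultiplier (σ i)).energy :=
        TrigPoly.integral_sum_norm_eval_sq_le hα (fun i => (hP i).applyMultiplier (σ i)) x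
    _ ≤ (2 * Real.pi / α + 1) * ∑ i, (P i).energy := by
        gcongr with i
        exact TrigPoly.energy_applyMultiplier_le (hσ i) (P i)
    _ ≤ (2 * Real.pi / α + 1) * ⨆ x : ℝ, ∫ s in x..(x + 1), ∑ i, ‖(P i).eval s‖ ^ 2 := by
        gcongr
        exact TrigPoly.sum_energy_le_iSup_integral hα hP

/-- Vector-valued `S²` bound for the modified Hilbert transforms on `α`-separated
trigonometric polynomials:
`sup_x ∫_x^{x+1} Σ_m |H_± f_m|² ≤ (2π/α + 1) sup_x ∫_x^{x+1} Σ_m |f_m|²`. -/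
theorem stmt_8 (pos : Bool) (α : ℝ) (hα : 0 < α) (M : ℕ) (P : Fin M → TrigPoly)
    (hsep : ∀ m : Fin M, (P m).sep α) :
    (⨆ x : ℝ, ∫ s in x..(x + 1), ∑ m : Fin M, ‖TrigPoly.hilb pos (P m) s‖ ^ 2)
      ≤ (2 * Real.pi / α + 1)
        * ⨆ x : ℝ, ∫ s in x..(x + 1), ∑ m : Fin M, ‖(P m).eval s‖ ^ 2 := by
  simp only [TrigPoly.hilb_eq_eval_applyMultiplier]
  exact stmt_8_general hα hsep fun _ ξ => (norm_neg_I_mul_sgnPM pos ξ).le
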